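/- Let {c_ij : 1 ≤ i,j ≤ n} be an n×n array of real numbers with n ≥ 2 such that all row sums and column sums vanish, (1/(n−1)) Σ_{i,j=1}^n c_ij² = 1, and |c_ij| ≤ C for all i,j and some constant C > 0. Let π be a uniformly random permutation of {1,…,n} and W = Σ_{i=1}^n c_{iπ(i)}. Then sup_{z∈ℝ} |P(W ≤ z) − Φ(z)| ≤ 451 C. -/

import Mathlib

open MeasureTheory ProbabilityTheory
open scoped ENNReal

/-- The standard normal cumulative distribution function `Φ`. -/
noncomputable def stdNormalCDF (z : ℝ) : ℝ := ((gaussianReal 0 1) (Set.Iic z)).toReal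

/-- A mean value inequality in terms of right derivatives. -/
lemma mul_sub_le_sub_of_right_deriv {f g : ℝ → ℝ} (hf : Continuous f)
    (hg : ∀ w, HasDerivWithinAt f (g w) (Set.Ici w) w) {a b m : ℝ} (hab : a ≤ b)
    (hm : ∀ w ∈ Set.Ico a b, m ≤ g w) : m * (b - a) ≤ f b - f a := by
  have hlin : ∀ w, HasDerivWithinAt (fun w => f a + m * (w - a)) m (Set.Ici w) w := fun w => by
    simpa using ((((hasDerivAt_id w).sub_const a).const_mul m).const_add (f a)).hasDerivWithinAt
  have := image_le_of_deriv_right_le_deriv_boundary (f := fun w => f a + m * (w - a))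
    (f' := fun _ => m) (a := a) (b := b) (B := f) (B' := g) (by fun_prop)
    (fun w _ => hlin w) (by simp) hf.continuousOn (fun w _ => hg w) hm
    (Set.right_mem_Icc.2 hab)
  linarith

lemma abs_sub_le_of_right_deriv {f g : ℝ → ℝ} (hf : Continuous f)
    (hg : ∀ w, HasDerivWithinAt f (g w) (Set.Ici w) w) {K : ℝ} (hK : ∀ w, |g w| ≤ K) (a b : ℝ) :
    |f b - f a| ≤ K * |b - a| := by
  wlog hab : a ≤ b generalizing a b
  · rw [abs_sub_comm (f b), abs_sub_comm b]
    exact this b a (le_of_not_ge hab)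
  have h₁ := mul_sub_le_sub_of_right_deriv hf hg hab (m := -K)
    fun w _ => (abs_le.1 (hK w)).1
  have h₂ := mul_sub_le_sub_of_right_deriv hf.neg (fun w => (hg w).neg) hab (m := -K)
    fun w _ => neg_le_neg (abs_le.1 (hK w)).2
  rw [Pi.neg_apply, Pi.neg_apply] at h₂
  rw [abs_of_nonneg (sub_nonneg.2 hab), abs_le]
  constructor <;> linarith

section Gaussian

lemma gaussianPDFReal_std (w : ℝ) :
    gaussianPDFReal 0 1 w = (√(2 * Real.pi))⁻¹ * Real.exp (-w ^ 2 / 2) := by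
  simp [gaussianPDFReal]

lemma gaussianPDFReal_std_pos (w : ℝ) : 0 < gaussianPDFReal 0 1 w :=
  gaussianPDFReal_pos 0 1 w one_ne_zero

lemma hasDerivAt_gaussianPDFReal_std (w : ℝ) :
    HasDerivAt (gaussianPDFReal 0 1) (-w * gaussianPDFReal 0 1 w) w := by
  have h : HasDerivAt (fun w : ℝ => (√(2 * Real.pi))⁻¹ * Real.exp (-w ^ 2 / 2))
      ((√(2 * Real.pi))⁻¹ * (Real.exp (-w ^ 2 / 2) * (-(2 * w) / 2))) w := by
    have := (((hasDerivAt_pow 2 w).neg).div_const 2).exp.const_mul (√(2 * Real.pi))⁻¹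
    simpa using this
  rw [show gaussianPDFReal 0 1 = fun w : ℝ => (√(2 * Real.pi))⁻¹ * Real.exp (-w ^ 2 / 2) from
    funext gaussianPDFReal_std]
  convert h using 1
  ring

lemma continuous_gaussianPDFReal_std : Continuous (gaussianPDFReal 0 1) :=
  continuous_iff_continuousAt.2 fun w => (hasDerivAt_gaussianPDFReal_std w).continuousAt

lemma gaussianPDFReal_std_le_one (w : ℝ) : gaussianPDFReal 0 1 w ≤ 1 := by
  rw [gaussianPDFReal_std]
  have h₁ : (√(2 * Real.pi))⁻¹ ≤ 1 := by
    apply inv_le_one_of_one_le₀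
    rw [Real.one_le_sqrt]
    linarith [Real.pi_gt_three]
  have h₂ : Real.exp (-w ^ 2 / 2) ≤ 1 := Real.exp_le_one_iff.2 (by nlinarith [sq_nonneg w])
  exact mul_le_one₀ h₁ (Real.exp_pos _).le h₂

lemma one_le_six_mul_gaussianPDFReal_std {w : ℝ} (hw : |w| ≤ 1) :
    1 ≤ 6 * gaussianPDFReal 0 1 w := by
  rw [gaussianPDFReal_std]
  have hw2 : w ^ 2 ≤ 1 := by rwa [sq_le_one_iff_abs_le_one]
  have h₁ : (3 : ℝ)⁻¹ ≤ (√(2 * Real.pi))⁻¹ := by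
    apply inv_anti₀ (by have := Real.pi_pos; positivity)
    rw [Real.sqrt_le_left (by norm_num)]
    linarith [Real.pi_lt_four]
  have h₂ : (2 : ℝ)⁻¹ ≤ Real.exp (-w ^ 2 / 2) := by
    have := Real.add_one_le_exp (-w ^ 2 / 2)
    linarith
  nlinarith [mul_le_mul h₁ h₂ (by norm_num) (by positivity)]

lemma tendsto_gaussianPDFReal_std_cocompact :
    Filter.Tendsto (gaussianPDFReal 0 1) (Filter.cocompact ℝ) (nhds 0) := by
  have h := (tendsto_rpow_abs_mul_exp_neg_mul_sq_cocompact (a := 1 / 2) (by norm_num) 0).const_mul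
    (√(2 * Real.pi))⁻¹
  rw [mul_zero] at h
  refine h.congr fun w => ?_
  rw [gaussianPDFReal_std, Real.rpow_zero, one_mul]
  congr 2
  ring

lemma stdNormalCDF_eq_integral (z : ℝ) :
    stdNormalCDF z = ∫ t in Set.Iic z, gaussianPDFReal 0 1 t := by
  rw [stdNormalCDF, gaussianReal_apply_eq_integral _ one_ne_zero, ENNReal.toReal_ofReal]
  exact integral_nonneg fun t => gaussianPDFReal_nonneg 0 1 t

lemma one_sub_stdNormalCDF_eq_integral (z : ℝ) :
    1 - stdNormalCDF z = ∫ t in Set.Ioi z, gaussianPDFReal 0 1 t := by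
  have hint := integrable_gaussianPDFReal 0 1
  have h := intervalIntegral.integral_Iic_add_Ioi (b := z) hint.integrableOn hint.integrableOn
  rw [integral_gaussianPDFReal_eq_one 0 one_ne_zero] at h
  rw [stdNormalCDF_eq_integral, ← h]
  ring

lemma stdNormalCDF_nonneg (z : ℝ) : 0 ≤ stdNormalCDF z := ENNReal.toReal_nonneg

lemma stdNormalCDF_le_one (z : ℝ) : stdNormalCDF z ≤ 1 := by
  have : 0 ≤ 1 - stdNormalCDF z := by
    rw [one_sub_stdNormalCDF_eq_integral]
    exact integral_nonneg fun t => gaussianPDFReal_nonneg 0 1 t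
  linarith

lemma hasDerivAt_stdNormalCDF (z : ℝ) :
    HasDerivAt stdNormalCDF (gaussianPDFReal 0 1 z) z := by
  have hint := integrable_gaussianPDFReal 0 1
  have h : stdNormalCDF = fun w => stdNormalCDF 0 + ∫ t in (0 : ℝ)..w, gaussianPDFReal 0 1 t := by
    funext w
    rw [← intervalIntegral.integral_Iic_sub_Iic hint.integrableOn hint.integrableOn,
      stdNormalCDF_eq_integral, stdNormalCDF_eq_integral]
    ring
  rw [h]
  exact (intervalIntegral.integral_hasDerivAt_right hint.intervalIntegrable
    (continuous_gaussianPDFReal_std.stronglyMeasurableAtFilter _ _)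
    continuous_gaussianPDFReal_std.continuousAt).const_add _

lemma continuous_stdNormalCDF : Continuous stdNormalCDF :=
  continuous_iff_continuousAt.2 fun w => (hasDerivAt_stdNormalCDF w).continuousAt

lemma abs_stdNormalCDF_sub_le (a b : ℝ) : |stdNormalCDF b - stdNormalCDF a| ≤ |b - a| := by
  simpa using abs_sub_le_of_right_deriv continuous_stdNormalCDF
    (fun w => (hasDerivAt_stdNormalCDF w).hasDerivWithinAt) (K := 1)
    (fun w => by
      rw [abs_of_pos (gaussianPDFReal_std_pos w)]
      exact gaussianPDFReal_std_le_one w) a b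

lemma monotone_stdNormalCDF : Monotone stdNormalCDF :=
  monotone_of_deriv_nonneg (fun w => (hasDerivAt_stdNormalCDF w).differentiableAt) fun w => by
    rw [(hasDerivAt_stdNormalCDF w).deriv]
    exact (gaussianPDFReal_std_pos w).le

lemma mul_one_sub_stdNormalCDF_le {w : ℝ} (hw : 0 ≤ w) :
    w * (1 - stdNormalCDF w) ≤ gaussianPDFReal 0 1 w := by
  have hlim : Filter.Tendsto (fun t => -gaussianPDFReal 0 1 t) Filter.atTop (nhds 0) := by
    simpa using (tendsto_gaussianPDFReal_std_cocompact.mono_left atTop_le_cocompact).neg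
  have hder : ∀ t ∈ Set.Ioi w, HasDerivAt (fun t => -gaussianPDFReal 0 1 t)
      (t * gaussianPDFReal 0 1 t) t := fun t _ => by
    simpa using (hasDerivAt_gaussianPDFReal_std t).fun_neg
  have hpos : ∀ t ∈ Set.Ioi w, 0 ≤ t * gaussianPDFReal 0 1 t := fun t ht =>
    mul_nonneg (hw.trans (le_of_lt ht)) (gaussianPDFReal_std_pos t).le
  have hcont : ContinuousWithinAt (fun t => -gaussianPDFReal 0 1 t) (Set.Ici w) w :=
    continuous_gaussianPDFReal_std.neg.continuousWithinAt
  have hint := integrableOn_Ioi_deriv_of_nonneg hcont hder hpos hlim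
  have heq := integral_Ioi_of_hasDerivAt_of_tendsto hcont hder hint hlim
  rw [one_sub_stdNormalCDF_eq_integral, ← integral_const_mul]
  calc ∫ t in Set.Ioi w, w * gaussianPDFReal 0 1 t
      ≤ ∫ t in Set.Ioi w, t * gaussianPDFReal 0 1 t :=
        setIntegral_mono_on ((integrable_gaussianPDFReal 0 1).const_mul w).integrableOn hint
          measurableSet_Ioi fun t ht =>
            mul_le_mul_of_nonneg_right (le_of_lt ht) (gaussianPDFReal_std_pos t).le
    _ = gaussianPDFReal 0 1 w := by rw [heq]; ring

lemma stdNormalCDF_neg (w : ℝ) : stdNormalCDF (-w) = 1 - stdNormalCDF w := by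
  have hsymm : ∀ t, gaussianPDFReal 0 1 (-t) = gaussianPDFReal 0 1 t := fun t => by
    simp [gaussianPDFReal_std]
  rw [one_sub_stdNormalCDF_eq_integral, stdNormalCDF_eq_integral, ← integral_comp_neg_Ioi]
  simp [hsymm]

lemma neg_mul_stdNormalCDF_le {w : ℝ} (hw : w ≤ 0) :
    -w * stdNormalCDF w ≤ gaussianPDFReal 0 1 w := by
  have h := mul_one_sub_stdNormalCDF_le (neg_nonneg.2 hw)
  rw [← stdNormalCDF_neg, neg_neg] at h
  simpa [gaussianPDFReal_std] using h

/-- The bounded solution of the Stein equation `f' w - w f w = 𝟙 (w < x) - Φ x`. -/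
noncomputable def steinSolution (x w : ℝ) : ℝ :=
  stdNormalCDF (min w x) * (1 - stdNormalCDF (max w x)) / gaussianPDFReal 0 1 w

/-- The right derivative of `steinSolution x`. -/
noncomputable def steinSolutionDeriv (x w : ℝ) : ℝ :=
  w * steinSolution x w + (if w < x then 1 else 0) - stdNormalCDF x

lemma continuous_steinSolution (x : ℝ) : Continuous (steinSolution x) := by
  unfold steinSolution
  refine Continuous.div ?_ continuous_gaussianPDFReal_std
    fun w => (gaussianPDFReal_std_pos w).ne'
  exact (continuous_stdNormalCDF.comp (continuous_id.min continuous_const)).mul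
    (continuous_const.sub (continuous_stdNormalCDF.comp (continuous_id.max continuous_const)))

lemma hasDerivWithinAt_steinSolution (x w : ℝ) :
    HasDerivWithinAt (steinSolution x) (steinSolutionDeriv x w) (Set.Ici w) w := by
  have hφ := (gaussianPDFReal_std_pos w).ne'
  rcases lt_or_ge w x with hw | hw
  · have hd := (((hasDerivAt_stdNormalCDF w).mul_const (1 - stdNormalCDF x)).div
      (hasDerivAt_gaussianPDFReal_std w) hφ)
    have heq : steinSolution x =ᶠ[nhds w]
        fun t => stdNormalCDF t * (1 - stdNormalCDF x) / gaussianPDFReal 0 1 t := by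
      filter_upwards [Iio_mem_nhds hw] with t ht
      rw [steinSolution, min_eq_left (le_of_lt ht), max_eq_right (le_of_lt ht)]
    refine ((hd.congr_of_eventuallyEq heq).congr_deriv ?_).hasDerivWithinAt
    rw [steinSolutionDeriv, steinSolution, min_eq_left hw.le, max_eq_right hw.le, if_pos hw]
    field_simp
    ring
  · have hd := ((((hasDerivAt_stdNormalCDF w).const_sub 1).const_mul (stdNormalCDF x)).div
      (hasDerivAt_gaussianPDFReal_std w) hφ).hasDerivWithinAt (s := Set.Ici w)
    have heq : ∀ t ∈ Set.Ici w, steinSolution x t =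
        stdNormalCDF x * (1 - stdNormalCDF t) / gaussianPDFReal 0 1 t := fun t ht => by
      rw [steinSolution, min_eq_right (hw.trans ht), max_eq_left (hw.trans ht)]
    refine (hd.congr heq (heq w Set.self_mem_Ici)).congr_deriv ?_
    rw [steinSolutionDeriv, steinSolution, min_eq_right hw, max_eq_left hw, if_neg hw.not_gt]
    field_simp
    ring

lemma steinSolution_nonneg (x w : ℝ) : 0 ≤ steinSolution x w :=
  div_nonneg (mul_nonneg (stdNormalCDF_nonneg _) (sub_nonneg.2 (stdNormalCDF_le_one _)))
    (gaussianPDFReal_std_pos w).le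

lemma steinSolution_mul_le_left (x w : ℝ) :
    steinSolution x w * gaussianPDFReal 0 1 w ≤ stdNormalCDF w := by
  rw [steinSolution, div_mul_cancel₀ _ (gaussianPDFReal_std_pos w).ne']
  calc _ ≤ stdNormalCDF w * 1 := mul_le_mul (monotone_stdNormalCDF (min_le_left _ _))
        (by linarith [stdNormalCDF_nonneg (max w x)])
        (sub_nonneg.2 (stdNormalCDF_le_one _)) (stdNormalCDF_nonneg _)
    _ = _ := mul_one _

lemma steinSolution_mul_le_right (x w : ℝ) :
    steinSolution x w * gaussianPDFReal 0 1 w ≤ 1 - stdNormalCDF w := by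
  rw [steinSolution, div_mul_cancel₀ _ (gaussianPDFReal_std_pos w).ne']
  calc _ ≤ 1 * (1 - stdNormalCDF w) := mul_le_mul (stdNormalCDF_le_one _)
        (by linarith [monotone_stdNormalCDF (le_max_left w x)])
        (sub_nonneg.2 (stdNormalCDF_le_one _)) zero_le_one
    _ = _ := one_mul _

lemma abs_mul_steinSolution_le_one (x w : ℝ) : |w| * steinSolution x w ≤ 1 := by
  refine le_of_mul_le_mul_right ?_ (gaussianPDFReal_std_pos w)
  rw [one_mul, mul_assoc]
  rcases le_total 0 w with hw | hw
  · rw [abs_of_nonneg hw]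
    exact (mul_le_mul_of_nonneg_left (steinSolution_mul_le_right x w) hw).trans
      (mul_one_sub_stdNormalCDF_le hw)
  · rw [abs_of_nonpos hw]
    exact (mul_le_mul_of_nonneg_left (steinSolution_mul_le_left x w) (neg_nonneg.2 hw)).trans
      (neg_mul_stdNormalCDF_le hw)

lemma steinSolution_le_six (x w : ℝ) : steinSolution x w ≤ 6 := by
  have h₀ := steinSolution_nonneg x w
  rcases le_total |w| 1 with hw | hw
  · have h₁ := one_le_six_mul_gaussianPDFReal_std hw
    have h₂ := (steinSolution_mul_le_left x w).trans (stdNormalCDF_le_one w)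
    nlinarith
  · nlinarith [abs_mul_steinSolution_le_one x w]

lemma abs_steinSolutionDeriv_le_two (x w : ℝ) : |steinSolutionDeriv x w| ≤ 2 := by
  have h₁ : |w * steinSolution x w| ≤ 1 := by
    rw [abs_mul, abs_of_nonneg (steinSolution_nonneg x w)]
    exact abs_mul_steinSolution_le_one x w
  have h₂ := abs_le.1 h₁
  have h₃ := stdNormalCDF_nonneg x
  have h₄ := stdNormalCDF_le_one x
  rw [steinSolutionDeriv, abs_le]
  split_ifs <;> constructor <;> linarith

lemma abs_mul_steinSolution_sub_le (x : ℝ) {v w δ : ℝ} (h : |w - v| ≤ δ) :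
    |w * steinSolution x w - v * steinSolution x v| ≤ (2 * |v| + 6) * δ := by
  have hlip := abs_sub_le_of_right_deriv (continuous_steinSolution x)
    (hasDerivWithinAt_steinSolution x) (abs_steinSolutionDeriv_le_two x) v w
  calc |w * steinSolution x w - v * steinSolution x v|
      = |(w - v) * steinSolution x w + v * (steinSolution x w - steinSolution x v)| := by
        congr 1; ring
    _ ≤ |w - v| * steinSolution x w + |v| * |steinSolution x w - steinSolution x v| := by
        refine (abs_add_le _ _).trans_eq ?_
        rw [abs_mul, abs_mul, abs_of_nonneg (steinSolution_nonneg x w)]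
    _ ≤ δ * 6 + |v| * (2 * δ) := by
        refine add_le_add (mul_le_mul h (steinSolution_le_six x w) (steinSolution_nonneg x w)
          ((abs_nonneg _).trans h)) (mul_le_mul_of_nonneg_left ?_ (abs_nonneg v))
        linarith
    _ = _ := by ring

end Gaussian

section Permutations

open Equiv

variable {α : Type*}

/-- The change of `permSum c` under a transposition of the rows `i`, `j` matched with `k`, `l`. -/
def crossDiff (c : α → α → ℝ) (i j k l : α) : ℝ := c i k + c j l - c i l - c j k

lemma abs_crossDiff_le {c : α → α → ℝ} {C : ℝ} (hc : ∀ i j, |c i j| ≤ C) (i j k l : α) :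
    |crossDiff c i j k l| ≤ 4 * C := by
  have h := fun i j => abs_le.1 (hc i j)
  rw [crossDiff, abs_le]
  constructor <;> linarith [(h i k).1, (h i k).2, (h j l).1, (h j l).2, (h i l).1, (h i l).2,
    (h j k).1, (h j k).2]

lemma crossDiff_self_left (c : α → α → ℝ) (i k l : α) : crossDiff c i i k l = 0 := by
  simp [crossDiff]

lemma crossDiff_self_right (c : α → α → ℝ) (i j k : α) : crossDiff c i j k k = 0 := by
  simp [crossDiff]

section Matching

variable [DecidableEq α]

/-- The permutation obtained from `σ` by two transpositions of values, after which
`i ↦ k` and `j ↦ l`. -/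
def matchPerm (i j k l : α) (σ : Perm α) : Perm α :=
  swap l ((swap k (σ i) * σ) j) * (swap k (σ i) * σ)

lemma matchPerm_apply_left {i j k l : α} (hij : i ≠ j) (hkl : k ≠ l) (σ : Perm α) :
    matchPerm i j k l σ i = k := by
  have h : (swap k (σ i) * σ) i = k := by simp
  have h' : (swap k (σ i) * σ) j ≠ k := fun hj =>
    hij ((swap k (σ i) * σ).injective (h.trans hj.symm))
  rw [matchPerm, Perm.mul_apply, h, swap_apply_of_ne_of_ne hkl h'.symm]

lemma matchPerm_apply_right (i j k l : α) (σ : Perm α) : matchPerm i j k l σ j = l := by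
  rw [matchPerm, Perm.mul_apply, swap_apply_right]

end Matching

variable [Fintype α]

/-- The sum of the entries of the array `c` selected by the permutation `σ`. -/
def permSum (c : α → α → ℝ) (σ : Perm α) : ℝ := ∑ i, c i (σ i)

lemma sum_crossDiff_sq {c : α → α → ℝ} (hrow : ∀ i, ∑ j, c i j = 0) (hcol : ∀ j, ∑ i, c i j = 0) :
    ∑ i, ∑ j, ∑ k, ∑ l, crossDiff c i j k l ^ 2 =
      4 * (Fintype.card α : ℝ) ^ 2 * ∑ i, ∑ j, c i j ^ 2 := by
  have key : ∀ i j, ∑ k, ∑ l, crossDiff c i j k l ^ 2 =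
      2 * Fintype.card α * (∑ k, c i k ^ 2 + ∑ k, c j k ^ 2 - 2 * ∑ k, c i k * c j k) := by
    intro i j
    have : ∀ k l, crossDiff c i j k l ^ 2 = (c i k - c j k) ^ 2 + (c i l - c j l) ^ 2
        - 2 * ((c i k - c j k) * (c i l - c j l)) := fun k l => by rw [crossDiff]; ring
    simp only [this, Finset.sum_sub_distrib, Finset.sum_add_distrib, ← Finset.mul_sum,
      hrow, Finset.sum_const, Finset.card_univ, nsmul_eq_mul, sub_self, mul_zero, sub_zero]
    simp only [sub_sq, Finset.sum_sub_distrib, Finset.sum_add_distrib, mul_assoc,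
      ← Finset.mul_sum]
    ring
  have hcross : ∑ i, ∑ j, ∑ k, c i k * c j k = 0 := by
    refine Finset.sum_eq_zero fun i _ => ?_
    rw [Finset.sum_comm]
    simp [← Finset.mul_sum, hcol]
  simp only [key, ← Finset.mul_sum, Finset.sum_sub_distrib, Finset.sum_add_distrib, hcross,
    Finset.sum_const, Finset.card_univ, nsmul_eq_mul]
  ring

lemma sum_crossDiff_apply {c : α → α → ℝ} (hrow : ∀ i, ∑ j, c i j = 0) (σ : Perm α) :
    ∑ i, ∑ j, crossDiff c i j (σ i) (σ j) = 2 * Fintype.card α * permSum c σ := by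
  have h : ∀ i, ∑ j, c i (σ j) = 0 := fun i => (Equiv.sum_comp σ (c i)).trans (hrow i)
  have h' : ∑ i, ∑ j, c j (σ i) = 0 := by
    rw [Finset.sum_comm]
    exact Finset.sum_eq_zero fun j _ => h j
  simp only [crossDiff, Finset.sum_sub_distrib, Finset.sum_add_distrib, h, h', Finset.sum_const,
    Finset.card_univ, nsmul_eq_mul, ← Finset.mul_sum, ← permSum.eq_1 c σ]
  simp
  ring

variable [DecidableEq α]

lemma permSum_mul_swap (c : α → α → ℝ) (σ : Perm α) (i j : α) :
    permSum c σ - permSum c (σ * swap i j) = crossDiff c i j (σ i) (σ j) := by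
  rcases eq_or_ne i j with rfl | hij
  · simp [crossDiff, ← Perm.one_def]
  · rw [permSum, permSum, ← Finset.sum_sub_distrib, Fintype.sum_eq_add i j hij]
    · simp [crossDiff]
      ring
    · rintro m ⟨hi, hj⟩
      simp [swap_apply_of_ne_of_ne hi hj]

lemma abs_permSum_mul_swap_sub_le {c : α → α → ℝ} {C : ℝ} (hc : ∀ i j, |c i j| ≤ C)
    (σ : Perm α) (i j : α) : |permSum c (σ * swap i j) - permSum c σ| ≤ 4 * C := by
  rw [abs_sub_comm, permSum_mul_swap]
  exact abs_crossDiff_le hc _ _ _ _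

lemma abs_permSum_swap_mul_sub_le {c : α → α → ℝ} {C : ℝ} (hc : ∀ i j, |c i j| ≤ C)
    (σ : Perm α) (k l : α) : |permSum c (swap k l * σ) - permSum c σ| ≤ 4 * C := by
  rw [show swap k l * σ = σ * swap (σ⁻¹ k) (σ⁻¹ l) by
    rw [mul_swap_eq_swap_mul]; simp]
  exact abs_permSum_mul_swap_sub_le hc _ _ _

lemma abs_permSum_matchPerm_sub_le {c : α → α → ℝ} {C : ℝ} (hc : ∀ i j, |c i j| ≤ C)
    (i j k l : α) (σ : Perm α) : |permSum c (matchPerm i j k l σ) - permSum c σ| ≤ 8 * C := by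
  have h₁ := abs_permSum_swap_mul_sub_le hc σ k (σ i)
  have h₂ := abs_permSum_swap_mul_sub_le hc (swap k (σ i) * σ) l ((swap k (σ i) * σ) j)
  have h₃ := abs_sub_le (permSum c (matchPerm i j k l σ)) (permSum c (swap k (σ i) * σ))
    (permSum c σ)
  rw [matchPerm] at *
  linarith

/-- Forcing `i ↦ k` by a transposition of values pushes the uniform distribution on the
permutations satisfying `P` to the uniform distribution on those which also send `i` to `k`. -/
lemma sum_swap_apply_mul (P : Perm α → Prop) [DecidablePred P] (i k : α) (T : Finset α)
    (hT : ∀ σ, P σ → σ i ∈ T) (hP : ∀ m ∈ T, ∀ σ, P (swap k m * σ) ↔ P σ) (F : Perm α → ℝ) :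
    ∑ σ with P σ, F (swap k (σ i) * σ) = T.card * ∑ σ with P σ ∧ σ i = k, F σ := by
  rw [← Finset.sum_fiberwise_of_maps_to (t := T) (g := fun σ : Perm α => σ i)
    (fun σ hσ => hT σ (by simpa using hσ)), ← nsmul_eq_mul, ← Finset.sum_const]
  refine Finset.sum_congr rfl fun m hm => ?_
  refine Finset.sum_equiv (Equiv.mulLeft (swap k m)) (fun σ => ?_) (fun σ hσ => ?_)
  · simp only [Finset.mem_filter, Finset.mem_univ, true_and, Equiv.coe_mulLeft, hP m hm σ,
      Perm.mul_apply]
    rw [swap_apply_eq_iff, swap_apply_left]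
  · simp only [Finset.mem_filter, Finset.mem_univ, true_and] at hσ
    simp [hσ.2]

lemma sum_matchPerm {i j k l : α} (hij : i ≠ j) (hkl : k ≠ l) (F : Perm α → ℝ) :
    ∑ σ, F (matchPerm i j k l σ) =
      Fintype.card α * ((Fintype.card α - 1) * ∑ σ with σ i = k ∧ σ j = l, F σ) := by
  have h₁ := sum_swap_apply_mul (fun _ => True) i k Finset.univ (by simp) (by simp)
    (fun σ => F (swap l (σ j) * σ))
  have h₂ := sum_swap_apply_mul (fun σ : Perm α => σ i = k) j l (Finset.univ.erase k)
    (fun σ hσ => by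
      simp only [Finset.mem_erase, Finset.mem_univ, and_true]
      exact fun h => hij (σ.injective (hσ.trans h.symm)))
    (fun m hm σ => by
      rw [Perm.mul_apply, swap_apply_eq_iff,
        swap_apply_of_ne_of_ne hkl (Finset.ne_of_mem_erase hm).symm]) F
  rw [Finset.card_erase_of_mem (Finset.mem_univ k), Finset.card_univ,
    Nat.cast_sub (Fintype.card_pos_iff.2 ⟨k⟩), Nat.cast_one] at h₂
  simp only [Finset.filter_true, true_and, Finset.card_univ] at h₁
  rw [← h₂, ← h₁]
  rfl

/-- The exchangeable pair identity for random transpositions. -/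
lemma sum_permSum_mul {c : α → α → ℝ} (hrow : ∀ i, ∑ j, c i j = 0) (f : ℝ → ℝ) :
    4 * Fintype.card α * ∑ σ, permSum c σ * f (permSum c σ) =
      ∑ i, ∑ j, ∑ σ : Perm α, crossDiff c i j (σ i) (σ j) *
        (f (permSum c σ) - f (permSum c (σ * swap i j))) := by
  have hflip : ∀ i j, ∑ σ : Perm α, crossDiff c i j (σ i) (σ j) *
        (f (permSum c σ) - f (permSum c (σ * swap i j))) =
      2 * ∑ σ : Perm α, crossDiff c i j (σ i) (σ j) * f (permSum c σ) := by
    intro i j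
    have h := Equiv.sum_comp (Equiv.mulRight (swap i j))
      fun σ : Perm α => crossDiff c i j (σ i) (σ j) * f (permSum c σ)
    simp only [Equiv.coe_mulRight, Perm.mul_apply, swap_apply_left, swap_apply_right] at h
    rw [two_mul]
    nth_rw 2 [← h]
    rw [← Finset.sum_add_distrib]
    refine Finset.sum_congr rfl fun σ _ => ?_
    rw [crossDiff, crossDiff]
    ring
  simp only [hflip, ← Finset.mul_sum]
  have hswap : ∑ i, ∑ j, ∑ σ : Perm α, crossDiff c i j (σ i) (σ j) * f (permSum c σ) =
      ∑ σ : Perm α, (∑ i, ∑ j, crossDiff c i j (σ i) (σ j)) * f (permSum c σ) := by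
    simp only [Finset.sum_mul]
    rw [Finset.sum_comm (s := (Finset.univ : Finset (Perm α)))]
    exact Finset.sum_congr rfl fun i _ => Finset.sum_comm
  rw [hswap]
  simp only [sum_crossDiff_apply hrow, mul_assoc, ← Finset.mul_sum]
  ring

lemma sum_apply_pair_eq_sum_matchPerm {D : α → α → ℝ} (hD : ∀ k, D k k = 0) {i j : α}
    (hij : i ≠ j) (G : Perm α → ℝ) :
    Fintype.card α * (Fintype.card α - 1) * ∑ σ : Perm α, D (σ i) (σ j) * G σ =
      ∑ k, ∑ l, ∑ σ, D k l * G (matchPerm i j k l σ) := by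
  have hfib : ∑ σ : Perm α, D (σ i) (σ j) * G σ =
      ∑ k, ∑ l, ∑ σ : Perm α with σ i = k ∧ σ j = l, D k l * G σ := by
    rw [← Finset.sum_fiberwise Finset.univ (fun σ : Perm α => σ i)]
    refine Finset.sum_congr rfl fun k _ => ?_
    rw [← Finset.sum_fiberwise _ (fun σ : Perm α => σ j)]
    refine Finset.sum_congr rfl fun l _ => ?_
    rw [Finset.filter_filter]
    refine Finset.sum_congr rfl fun σ hσ => ?_
    obtain ⟨rfl, rfl⟩ := (Finset.mem_filter.1 hσ).2
    rfl
  simp only [hfib, ← Finset.mul_sum]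
  rw [Finset.mul_sum]
  refine Finset.sum_congr rfl fun k _ => ?_
  rw [Finset.mul_sum]
  refine Finset.sum_congr rfl fun l _ => ?_
  rcases eq_or_ne k l with rfl | hkl
  · simp [hD]
  · rw [sum_matchPerm hij hkl G]
    ring

/-- The zero bias identity for `permSum c`. -/
lemma sum_permSum_mul_eq_sum_matchPerm {c : α → α → ℝ} (hrow : ∀ i, ∑ j, c i j = 0) (f : ℝ → ℝ) :
    4 * (Fintype.card α : ℝ) ^ 2 * (Fintype.card α - 1) * ∑ σ, permSum c σ * f (permSum c σ) =
      ∑ i, ∑ j, ∑ k, ∑ l, ∑ σ, crossDiff c i j k l *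
        (f (permSum c (matchPerm i j k l σ)) -
          f (permSum c (matchPerm i j k l σ * swap i j))) := by
  calc _ = Fintype.card α * (Fintype.card α - 1) *
        (4 * Fintype.card α * ∑ σ, permSum c σ * f (permSum c σ)) := by ring
    _ = _ := by
      rw [sum_permSum_mul hrow, Finset.mul_sum]
      refine Finset.sum_congr rfl fun i _ => ?_
      rw [Finset.mul_sum]
      refine Finset.sum_congr rfl fun j _ => ?_
      rcases eq_or_ne i j with rfl | hij
      · simp [crossDiff_self_left]
      · exact sum_apply_pair_eq_sum_matchPerm (crossDiff_self_right c i j) hij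
          fun σ => f (permSum c σ) - f (permSum c (σ * swap i j))

/-- If `f'` is bounded below by `m σ` near `permSum c σ` for each `σ`, then the zero bias identity
bounds `∑ σ, W σ * f (W σ)` below by `∑ σ, m σ`. -/
lemma sum_le_sum_permSum_mul {c : α → α → ℝ} (hcard : 2 ≤ Fintype.card α)
    (hrow : ∀ i, ∑ j, c i j = 0) (hcol : ∀ j, ∑ i, c i j = 0)
    (hnorm : ∑ i, ∑ j, c i j ^ 2 = Fintype.card α - 1)
    {C : ℝ} (hc : ∀ i j, |c i j| ≤ C) {f g : ℝ → ℝ} (hf : Continuous f)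
    (hg : ∀ w, HasDerivWithinAt f (g w) (Set.Ici w) w) {m : Perm α → ℝ}
    (hm : ∀ σ w, |w - permSum c σ| ≤ 12 * C → m σ ≤ g w) :
    ∑ σ, m σ ≤ ∑ σ, permSum c σ * f (permSum c σ) := by
  have hpos : 0 < 4 * (Fintype.card α : ℝ) ^ 2 * (Fintype.card α - 1) := by
    have : (2 : ℝ) ≤ Fintype.card α := by exact_mod_cast hcard
    have : (0 : ℝ) < Fintype.card α - 1 := by linarith
    positivity
  refine le_of_mul_le_mul_left ?_ hpos
  rw [sum_permSum_mul_eq_sum_matchPerm hrow, mul_assoc (4 * _), ← hnorm, ← mul_assoc,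
    ← sum_crossDiff_sq hrow hcol]
  simp only [Finset.sum_mul]
  refine Finset.sum_le_sum fun i _ => Finset.sum_le_sum fun j _ => Finset.sum_le_sum fun k _ =>
    Finset.sum_le_sum fun l _ => ?_
  rw [Finset.mul_sum]
  refine Finset.sum_le_sum fun σ _ => ?_
  rcases eq_or_ne i j with rfl | hij
  · simp [crossDiff_self_left]
  rcases eq_or_ne k l with rfl | hkl
  · simp [crossDiff_self_right]
  have hC : 0 ≤ C := (abs_nonneg _).trans (hc i i)
  set b := permSum c (matchPerm i j k l σ) with hb
  set a := permSum c (matchPerm i j k l σ * swap i j) with ha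
  have hD : b - a = crossDiff c i j k l := by
    rw [hb, ha, permSum_mul_swap, matchPerm_apply_left hij hkl, matchPerm_apply_right]
  have hb' : |b - permSum c σ| ≤ 8 * C := abs_permSum_matchPerm_sub_le hc i j k l σ
  have hab : |a - b| ≤ 4 * C := abs_permSum_mul_swap_sub_le hc _ i j
  rw [← hD]
  rw [abs_le] at hb' hab
  rcases le_total a b with h | h
  · have := mul_sub_le_sub_of_right_deriv hf hg h (m := m σ) fun w hw => hm σ w <| by
      rw [abs_le]; constructor <;> linarith [hw.1, hw.2]
    nlinarith
  · have := mul_sub_le_sub_of_right_deriv hf hg h (m := m σ) fun w hw => hm σ w <| by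
      rw [abs_le]; constructor <;> linarith [hw.1, hw.2]
    nlinarith

lemma sum_abs_permSum_le {c : α → α → ℝ} (hcard : 2 ≤ Fintype.card α)
    (hrow : ∀ i, ∑ j, c i j = 0) (hcol : ∀ j, ∑ i, c i j = 0)
    (hnorm : ∑ i, ∑ j, c i j ^ 2 = Fintype.card α - 1)
    {C : ℝ} (hc : ∀ i j, |c i j| ≤ C) :
    ∑ σ, |permSum c σ| ≤ Fintype.card (Perm α) := by
  have h := sum_le_sum_permSum_mul hcard hrow hcol hnorm hc (f := fun w => -w) (g := fun _ => -1)
    (m := fun _ => -1) continuous_neg (fun w => (hasDerivAt_neg w).hasDerivWithinAt)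
    fun _ _ _ => le_rfl
  have hsq : ∑ σ, |permSum c σ| ≤ ∑ σ : Perm α, (1 / 2 - permSum c σ * -permSum c σ / 2) :=
    Finset.sum_le_sum fun σ _ => by nlinarith [sq_nonneg (|permSum c σ| - 1), sq_abs (permSum c σ)]
  rw [Finset.sum_sub_distrib, ← Finset.sum_div (f := fun σ => permSum c σ * -permSum c σ)] at hsq
  simp only [Finset.sum_const, Finset.card_univ, nsmul_eq_mul] at h hsq
  linarith

lemma abs_card_permSum_le_sub_stdNormalCDF_le {c : α → α → ℝ} (hcard : 2 ≤ Fintype.card α)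
    (hrow : ∀ i, ∑ j, c i j = 0) (hcol : ∀ j, ∑ i, c i j = 0)
    (hnorm : ∑ i, ∑ j, c i j ^ 2 = Fintype.card α - 1)
    {C : ℝ} (hC : 0 < C) (hc : ∀ i j, |c i j| ≤ C) (z : ℝ) :
    |((Finset.univ.filter fun σ : Perm α => permSum c σ ≤ z).card : ℝ) -
        Fintype.card (Perm α) * stdNormalCDF z| ≤ Fintype.card (Perm α) * (109 * C) := by
  set N : ℝ := (Fintype.card (Perm α) : ℝ) with hN
  have hN0 : 0 ≤ N := Nat.cast_nonneg _
  have hW : ∑ σ, |permSum c σ| ≤ N := sum_abs_permSum_le hcard hrow hcol hnorm hc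
  have hind : ((Finset.univ.filter fun σ : Perm α => permSum c σ ≤ z).card : ℝ) =
      ∑ σ, if permSum c σ ≤ z then (1 : ℝ) else 0 := by
    rw [Finset.sum_boole]
  have herr : ∑ σ, (2 * |permSum c σ| + 6) * (12 * C) ≤ N * (96 * C) := by
    rw [← Finset.sum_mul, Finset.sum_add_distrib, ← Finset.mul_sum, Finset.sum_const,
      Finset.card_univ, nsmul_eq_mul, ← hN]
    nlinarith
  have hupper : ∑ σ, (permSum c σ * steinSolution (z + 13 * C) (permSum c σ)
        - (2 * |permSum c σ| + 6) * (12 * C) + (if permSum c σ ≤ z then (1 : ℝ) else 0)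
        - stdNormalCDF (z + 13 * C)) ≤
      ∑ σ, permSum c σ * steinSolution (z + 13 * C) (permSum c σ) := by
    refine sum_le_sum_permSum_mul hcard hrow hcol hnorm hc (continuous_steinSolution _)
      (hasDerivWithinAt_steinSolution _) fun σ w hw => ?_
    have h₁ := (abs_le.1 (abs_mul_steinSolution_sub_le (z + 13 * C) hw)).1
    have h₂ : (if permSum c σ ≤ z then (1 : ℝ) else 0) ≤ if w < z + 13 * C then 1 else 0 := by
      have := (abs_le.1 hw).2
      split_ifs <;> linarith
    rw [steinSolutionDeriv]
    linarith
  have hlower : ∑ σ, (-(permSum c σ * steinSolution (z - 13 * C) (permSum c σ))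
        - (2 * |permSum c σ| + 6) * (12 * C) - (if permSum c σ ≤ z then (1 : ℝ) else 0)
        + stdNormalCDF (z - 13 * C)) ≤
      ∑ σ, permSum c σ * -steinSolution (z - 13 * C) (permSum c σ) := by
    refine sum_le_sum_permSum_mul hcard hrow hcol hnorm hc (f := fun w => -steinSolution _ w)
      (continuous_steinSolution _).neg
      (fun w => (hasDerivWithinAt_steinSolution _ w).neg) fun σ w hw => ?_
    have h₁ := (abs_le.1 (abs_mul_steinSolution_sub_le (z - 13 * C) hw)).2
    have h₂ : (if w < z - 13 * C then (1 : ℝ) else 0) ≤ if permSum c σ ≤ z then 1 else 0 := by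
      have := (abs_le.1 hw).1
      split_ifs <;> linarith
    rw [steinSolutionDeriv]
    linarith
  have hΦ₁ := (abs_le.1 (abs_stdNormalCDF_sub_le z (z + 13 * C))).2
  have hΦ₂ := (abs_le.1 (abs_stdNormalCDF_sub_le z (z - 13 * C))).1
  rw [add_sub_cancel_left, abs_of_pos (by positivity)] at hΦ₁
  rw [sub_sub_cancel_left, abs_neg, abs_of_pos (by positivity)] at hΦ₂
  simp only [Finset.sum_sub_distrib, Finset.sum_add_distrib, mul_neg, Finset.sum_neg_distrib,
    ← hind, Finset.sum_const, Finset.card_univ, nsmul_eq_mul, ← hN] at hupper hlower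
  have h₁ := mul_le_mul_of_nonneg_left hΦ₁ hN0
  have h₂ := mul_le_mul_of_nonneg_left hΦ₂ hN0
  simp only [Finset.sum_add_distrib, ← Finset.sum_mul, ← Finset.mul_sum, Finset.sum_const,
    Finset.card_univ, nsmul_eq_mul, ← hN] at herr hupper hlower
  rw [abs_le]
  constructor <;> linarith

end Permutations

/-- **Combinatorial CLT for bounded deterministic arrays.**
For a real `n × n` array (`n ≥ 2`) with vanishing row and column sums, normalized so that
`(1/(n-1)) ∑ c² = 1`, and with `|c i j| ≤ C` for all `i, j`, the distribution of
`W = ∑ i, c i (π i)` under the uniform random permutation `π` satisfies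
`sup_z |P(W ≤ z) - Φ(z)| ≤ 451 C`. -/
theorem combinatorial_clt_bounded
    (n : ℕ) (hn : 2 ≤ n) (c : Fin n → Fin n → ℝ)
    (hrow : ∀ i, ∑ j, c i j = 0)
    (hcol : ∀ j, ∑ i, c i j = 0)
    (hnorm : (1 / ((n : ℝ) - 1)) * ∑ i, ∑ j, c i j ^ 2 = 1)
    (C : ℝ) (hC : 0 < C) (hbound : ∀ i j, |c i j| ≤ C) :
    ∀ z : ℝ,
      |((Finset.univ.filter
            (fun σ : Equiv.Perm (Fin n) => ∑ i, c i (σ i) ≤ z)).card : ℝ)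
          / (n.factorial : ℝ) - stdNormalCDF z|
        ≤ 451 * C := by
  intro z
  have hn1 : (0 : ℝ) < n - 1 := by
    have : (2 : ℝ) ≤ n := by exact_mod_cast hn
    linarith
  have hsum : ∑ i, ∑ j, c i j ^ 2 = (Fintype.card (Fin n) : ℝ) - 1 := by
    rw [Fintype.card_fin]
    field_simp at hnorm
    exact hnorm
  have hmain := abs_card_permSum_le_sub_stdNormalCDF_le (by simpa using hn) hrow hcol hsum hC
    hbound z
  simp only [permSum, Fintype.card_perm, Fintype.card_fin] at hmain
  have hfac : (0 : ℝ) < n.factorial := by exact_mod_cast n.factorial_pos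
  rw [div_sub' hfac.ne', abs_div, abs_of_pos hfac, div_le_iff₀ hfac]
  refine hmain.trans ?_
  linarith [mul_pos hC hfac]
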